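/- Let m and ℓ be positive integers. Every periodic element of G(m,ℓ) is conjugate either to an integer power of s(0,m) = a_0 a_1 ⋯ a_{m−1} or to an integer power of Δ. -/

import Mathlib

/-- The word `a_i a_{i+1} ⋯ a_{i+p-1}` (indices mod `m`) in the free group on `ZMod m`. -/
def circWord (m : ℕ) (i : ZMod m) (p : ℕ) : FreeGroup (ZMod m) :=
  ((List.range p).map (fun k => FreeGroup.of (i + (k : ZMod m)))).prod

/-- The defining relations of the circular group `G(m,ℓ)`. -/
def circRels (m ℓ : ℕ) : Set (FreeGroup (ZMod m)) :=
  { r | ∃ i : ZMod m, r = circWord m i ℓ * (circWord m (i + 1) ℓ)⁻¹ }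

/-- The circular group `G(m,ℓ)`. -/
abbrev CircularGroup (m ℓ : ℕ) := PresentedGroup (circRels m ℓ)

/-- The generator `a_i` of the circular group `G(m,ℓ)`. -/
def circGen (m ℓ : ℕ) (i : ZMod m) : CircularGroup m ℓ :=
  PresentedGroup.of i

/-- The element `s(i,p) = a_i a_{i+1} ⋯ a_{i+p-1}` of the circular group `G(m,ℓ)`. -/
def circS (m ℓ : ℕ) (i : ZMod m) (p : ℕ) : CircularGroup m ℓ :=
  ((List.range p).map (fun k => circGen m ℓ (i + (k : ZMod m)))).prod

/-- The Garside element `Δ = s(0,ℓ)` of the circular group `G(m,ℓ)`. -/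
def circDelta (m ℓ : ℕ) : CircularGroup m ℓ := circS m ℓ 0 ℓ

/-- An element `x` of `G(m,ℓ)` is *periodic* if `x^a = Δ^b` for some nonzero
integer `a` and some integer `b`. -/
def CircIsPeriodic (m ℓ : ℕ) (x : CircularGroup m ℓ) : Prop :=
  ∃ a : ℤ, a ≠ 0 ∧ ∃ b : ℤ, x ^ a = (circDelta m ℓ) ^ b

/-!
Write `m = p * d` and `ℓ = q * d` with `p` and `q` coprime. The element `Δ ^ p = s(0,m) ^ q` is
central, and modulo it, for `q * a = p * b + 1`, the products `s(0,i)` satisfy the single recurrence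
`s(0,i+d) = β s(0,i) α` with `α = Δ ^ a` and `β = s(0,m) ^ (-b)`. This exhibits the central quotient
as a retract of a free product of cyclic groups in which `α` and `β` generate the finite factors. A
torsion element of a free product is conjugate into a factor, so periodic elements are, modulo the
central subgroup, conjugate to powers of `Δ` or `s(0,m)`; the central correction is itself a power
of both.
-/

open Monoid Monoid.CoprodI

theorem exists_mul_eq_mul_add_one_of_coprime {p q : ℕ} (hpq : p.Coprime q) (hq : q ≠ 0) :
    ∃ a b : ℕ, q * a = p * b + 1 := by
  obtain rfl | hp := p.eq_zero_or_pos
  · exact ⟨1, 0, by simpa using hpq⟩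
  have hone : 1 ≤ q ^ p.totient := Nat.one_le_pow _ _ (Nat.pos_of_ne_zero hq)
  obtain ⟨b, hb⟩ := (Nat.modEq_iff_dvd' hone).1 (Nat.ModEq.pow_totient hpq.symm).symm
  refine ⟨q ^ (p.totient - 1), b, ?_⟩
  rw [mul_pow_sub_one (Nat.totient_pos.2 hp).ne', ← hb, Nat.sub_add_cancel hone]

section Conj

variable {G : Type*} [Group G]

theorem isConj_mul_comm (x y : G) : IsConj (x * y) (y * x) :=
  isConj_iff.2 ⟨y, by group⟩

theorem exists_isConj_mul_of_isConj_mk {N : Subgroup G} [N.Normal] {x y : G}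
    (h : IsConj (x : G ⧸ N) y) : ∃ n ∈ N, IsConj x (y * n) := by
  obtain ⟨c, hc⟩ := isConj_iff.1 h
  obtain ⟨g, rfl⟩ := QuotientGroup.mk_surjective c
  exact ⟨y⁻¹ * (g * x * g⁻¹), QuotientGroup.eq.1 hc.symm, isConj_iff.2 ⟨g, by group⟩⟩

theorem exists_isConj_zpow_of_isConj_mk_zpow {x y z : G} [(Subgroup.zpowers z).Normal] {k : ℕ}
    (hy : y ^ k = z) {n : ℤ} (hx : IsConj (x : G ⧸ Subgroup.zpowers z) (y ^ n)) :
    ∃ n : ℤ, IsConj x (y ^ n) := by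
  obtain ⟨_, ⟨j, rfl⟩, h⟩ := exists_isConj_mul_of_isConj_mk hx
  refine ⟨n + k * j, ?_⟩
  rwa [zpow_add, zpow_mul, zpow_natCast, hy]

end Conj

section FreeProduct

variable {ι : Type*} {M : ι → Type*}

section Monoid

variable [∀ i, Monoid (M i)]

theorem exists_word_prod_eq_list_prod (L : List (Σ i, M i)) :
    ∃ w : Word M, w.prod = (L.map fun l => of l.2).prod ∧ w.toList.length ≤ L.length := by
  classical
  have length_tail_le_rcons {i : ι} (p : Word.Pair M i) :
      p.tail.toList.length ≤ (Word.rcons p).toList.length := by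
    unfold Word.rcons; split <;> simp [Word.cons]
  have length_rcons_le {i : ι} (p : Word.Pair M i) :
      (Word.rcons p).toList.length ≤ p.tail.toList.length + 1 := by
    unfold Word.rcons; split <;> simp [Word.cons]
  induction L with
  | nil => exact ⟨Word.empty, by simp⟩
  | cons l L ih =>
    obtain ⟨w, hprod, hlen⟩ := ih
    refine ⟨of l.2 • w, by simp [Word.prod_smul, hprod], ?_⟩
    have htail : (Word.equivPair l.1 w).tail.toList.length ≤ w.toList.length := by
      simpa only [← Word.equivPair_symm, Equiv.symm_apply_apply] using
        length_tail_le_rcons (Word.equivPair l.1 w)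
    calc (of l.2 • w).toList.length
        ≤ (Word.equivPair l.1 w).tail.toList.length + 1 := length_rcons_le _
      _ ≤ (l :: L).length := by grind

theorem exists_word_prod_eq_neWord_prod_mul {i j k : ι} (u : NeWord M i j) (v : NeWord M j k) :
    ∃ w : Word M, w.prod = u.prod * v.prod ∧
      w.toList.length < u.toList.length + v.toList.length := by
  obtain ⟨U, hU⟩ := List.getLast?_eq_some_iff.1 u.toList_getLast?
  obtain ⟨V, hV⟩ := List.head?_eq_some_iff.1 v.toList_head?
  obtain ⟨w, hprod, hlen⟩ := exists_word_prod_eq_list_prod (U ++ ⟨j, u.last * v.head⟩ :: V)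
  refine ⟨w, ?_, by grind⟩
  change w.prod = (u.toList.map fun l => of l.2).prod * (v.toList.map fun l => of l.2).prod
  simp [hprod, hU, hV, mul_assoc]

theorem neWord_prod_ne_one {i j : ι} (w : NeWord M i j) : w.prod ≠ 1 := by
  classical
  intro h
  have hw : w.toWord = Word.empty := Word.equiv.symm.injective h
  exact w.toList_ne_nil (congrArg Word.toList hw)

theorem exists_neWord_prod_eq_pow_succ {i j : ι} (hij : i ≠ j) (w : NeWord M i j) (n : ℕ) :
    ∃ w' : NeWord M i j, w'.prod = w.prod ^ (n + 1) := by
  induction n with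
  | zero => exact ⟨w, by simp⟩
  | succ n ih =>
    obtain ⟨w', hw'⟩ := ih
    exact ⟨w'.append hij.symm w, by rw [NeWord.append_prod, hw', pow_succ _ (n + 1)]⟩

theorem not_isOfFinOrder_neWord_prod {i j : ι} (hij : i ≠ j) (w : NeWord M i j) :
    ¬IsOfFinOrder w.prod := by
  intro hw
  obtain ⟨n, hn, hpow⟩ := isOfFinOrder_iff_pow_eq_one.1 hw
  obtain ⟨w', hw'⟩ := exists_neWord_prod_eq_pow_succ hij w (n - 1)
  rw [Nat.sub_add_cancel hn, hpow] at hw'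
  exact neWord_prod_ne_one w' hw'

end Monoid

theorem eq_one_or_exists_isConj_of_of_isOfFinOrder [∀ i, Group (M i)] {x : CoprodI M}
    (hx : IsOfFinOrder x) : x = 1 ∨ ∃ (i : ι) (g : M i), IsConj x (of g) := by
  classical
  obtain ⟨w, rfl⟩ := Word.equiv.symm.surjective x
  change IsOfFinOrder w.prod at hx
  change w.prod = 1 ∨ ∃ (i : ι) (g : M i), IsConj w.prod (of g)
  induction hn : w.toList.length using Nat.strong_induction_on generalizing w with
  | _ n ih =>
    obtain rfl | hw := eq_or_ne w Word.empty
    · exact Or.inl Word.prod_empty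
    obtain ⟨i, j, w, rfl⟩ := NeWord.of_word w hw
    obtain rfl : i = j := by
      by_contra hij
      exact not_isOfFinOrder_neWord_prod hij w hx
    cases w with
    | singleton g hg => exact Or.inr ⟨i, g, (NeWord.prod_singleton g hg) ▸ IsConj.refl _⟩
    | append u hne v =>
      -- Rotating `u * v` into `v * u` makes two letters of the same factor adjacent.
      obtain ⟨w', hprod, hlen⟩ := exists_word_prod_eq_neWord_prod_mul v u
      have hconj : IsConj (u.append hne v).prod w'.prod := by
        rw [NeWord.append_prod, hprod]
        exact isConj_mul_comm _ _
      have hlt : w'.toList.length < n := by simpa [← hn, NeWord.toWord, add_comm] using hlen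
      rcases ih _ hlt w' (hconj.isOfFinOrder hx) rfl with h | ⟨i, g, hg⟩
      · rw [h] at hconj
        exact Or.inl (isConj_one_right.1 hconj.symm)
      · exact Or.inr ⟨i, g, hconj.trans hg⟩

end FreeProduct

/-- The free product of the cyclic groups `ℤ/n_i`, where `n_i = 0` gives an infinite cyclic
factor. -/
abbrev CyclicFreeProduct {ι : Type*} (n : ι → ℕ) : Type _ :=
  CoprodI fun i => Multiplicative (ZMod (n i))

namespace CyclicFreeProduct

variable {ι : Type*} {n : ι → ℕ} {H : Type*} [Group H]

/-- The standard generator of the `i`-th cyclic factor. -/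
def gen (n : ι → ℕ) (i : ι) : CyclicFreeProduct n :=
  of (i := i) (Multiplicative.ofAdd (1 : ZMod (n i)))

theorem of_eq_gen_zpow (i : ι) (k : ℤ) :
    (of (i := i) (Multiplicative.ofAdd (k : ZMod (n i))) : CyclicFreeProduct n) = gen n i ^ k := by
  rw [gen, ← map_zpow, ← ofAdd_zsmul, zsmul_one]

theorem gen_pow (i : ι) : gen n i ^ n i = 1 := by
  rw [← zpow_natCast, ← of_eq_gen_zpow, Int.cast_natCast, ZMod.natCast_self, ofAdd_zero, map_one]

/-- The homomorphism out of a free product of cyclic groups with prescribed images of the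
generators. -/
def lift (c : ι → H) (hc : ∀ i, c i ^ n i = 1) : CyclicFreeProduct n →* H :=
  CoprodI.lift fun i => AddMonoidHom.toMultiplicativeLeft <| ZMod.lift (n i)
    ⟨zmultiplesHom (Additive H) (Additive.ofMul (c i)), by
      rw [zmultiplesHom_apply, natCast_zsmul, ← ofMul_pow, hc, ofMul_one]⟩

theorem lift_gen (c : ι → H) (hc : ∀ i, c i ^ n i = 1) (i : ι) : lift c hc (gen n i) = c i := by
  rw [lift, gen, lift_of, ← Int.cast_one]
  change Additive.toMul (ZMod.lift (n i) _ ((1 : ℤ) : ZMod (n i))) = c i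
  rw [ZMod.lift_coe, zmultiplesHom_apply, one_zsmul, toMul_ofMul]

theorem eq_one_or_exists_isConj_gen_zpow {x : CyclicFreeProduct n} (hx : IsOfFinOrder x) :
    x = 1 ∨ ∃ i, n i ≠ 0 ∧ ∃ k : ℤ, IsConj x (gen n i ^ k) := by
  obtain rfl | ⟨i, g, hg⟩ := eq_one_or_exists_isConj_of_of_isOfFinOrder hx
  · exact Or.inl rfl
  by_cases hi : n i = 0
  · have hfin : IsOfFinOrder g := (of_injective i).isOfFinOrder_iff.1 (hg.isOfFinOrder hx)
    have : IsMulTorsionFree (Multiplicative (ZMod (n i))) := by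
      rw [hi]
      exact inferInstanceAs (IsMulTorsionFree (Multiplicative ℤ))
    rw [hfin.eq_one', map_one] at hg
    exact Or.inl (isConj_one_right.1 hg.symm)
  · obtain ⟨k, hk⟩ := ZMod.intCast_surjective g.toAdd
    refine Or.inr ⟨i, hi, k, ?_⟩
    rwa [← of_eq_gen_zpow, hk, ofAdd_toAdd]

theorem eq_one_or_exists_isConj_of_leftInverse {φ : H →* CyclicFreeProduct n}
    {ψ : CyclicFreeProduct n →* H} (hψφ : Function.LeftInverse ψ φ) {x : H}
    (hx : IsOfFinOrder x) : x = 1 ∨ ∃ i, n i ≠ 0 ∧ ∃ k : ℤ, IsConj x (ψ (gen n i) ^ k) := by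
  rcases eq_one_or_exists_isConj_gen_zpow (φ.isOfFinOrder hx) with h | ⟨i, hi, k, hk⟩
  · exact Or.inl (hψφ.injective (h.trans (map_one φ).symm))
  · exact Or.inr ⟨i, hi, k, by simpa only [hψφ x, map_zpow] using ψ.map_isConj hk⟩

end CyclicFreeProduct

section StepSequence

variable {H : Type*} [Group H]

/-- The solution of the recurrence `t (i + d) = β * t i * α` with initial values `t r = f r` for
`r < d`. -/
def stepSequence (d : ℕ) (α β : H) (f : ℕ → H) (i : ℕ) : H :=
  β ^ (i / d) * f (i % d) * α ^ (i / d)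

theorem stepSequence_add_mul {d : ℕ} (hd : 0 < d) (α β : H) (f : ℕ → H) (i k : ℕ) :
    stepSequence d α β f (i + k * d) = β ^ k * stepSequence d α β f i * α ^ k := by
  simp only [stepSequence, Nat.add_mul_div_right _ _ hd, Nat.add_mul_mod_self_right, pow_add,
    pow_mul_comm β, mul_assoc]

theorem map_stepSequence {K : Type*} [Group K] (ψ : H →* K) (d : ℕ) (α β : H) (f : ℕ → H) (i : ℕ) :
    ψ (stepSequence d α β f i) = stepSequence d (ψ α) (ψ β) (fun r => ψ (f r)) i := by
  simp only [stepSequence, map_mul, map_pow]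

theorem stepSequence_eq_self {d : ℕ} {α β : H} {u : ℕ → H} (hu : ∀ i, u (i + d) = β * u i * α)
    (i : ℕ) : stepSequence d α β u i = u i := by
  have hiter (r k : ℕ) : u (r + d * k) = β ^ k * u r * α ^ k := by
    induction k with
    | zero => simp
    | succ k ih => rw [Nat.mul_succ, ← add_assoc, hu, ih, pow_succ' β, pow_succ α]; group
  rw [stepSequence, ← hiter, Nat.mod_add_div]

end StepSequence

namespace CircularGroup

section Relations

variable {m ℓ : ℕ}

theorem circS_zero (i : ZMod m) : circS m ℓ i 0 = 1 := rfl

theorem circS_succ (i : ZMod m) (p : ℕ) :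
    circS m ℓ i (p + 1) = circS m ℓ i p * circGen m ℓ (i + p) := by
  simp [circS, List.range_succ]

theorem circS_add (i : ZMod m) (p r : ℕ) :
    circS m ℓ i (p + r) = circS m ℓ i p * circS m ℓ (i + p) r := by
  induction r with
  | zero => simp [circS_zero]
  | succ r ih =>
    rw [← add_assoc, circS_succ, ih, circS_succ, mul_assoc, Nat.cast_add, add_assoc]

theorem mk_circWord (i : ZMod m) (p : ℕ) :
    PresentedGroup.mk (circRels m ℓ) (circWord m i p) = circS m ℓ i p := by
  rw [circS, circWord, map_list_prod, List.map_map]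
  rfl

theorem circS_natCast_eq_circDelta (k : ℕ) : circS m ℓ (k : ZMod m) ℓ = circDelta m ℓ := by
  induction k with
  | zero => rw [Nat.cast_zero, circDelta]
  | succ k ih =>
    have h : PresentedGroup.mk (circRels m ℓ) (circWord m k ℓ) =
        PresentedGroup.mk (circRels m ℓ) (circWord m (k + 1) ℓ) :=
      PresentedGroup.mk_eq_mk_of_mul_inv_mem ⟨k, rfl⟩
    rw [Nat.cast_succ, ← mk_circWord, ← h, mk_circWord, ih]

theorem circS_add_mul_length (p k : ℕ) :
    circS m ℓ 0 (p + k * ℓ) = circS m ℓ 0 p * circDelta m ℓ ^ k := by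
  induction k with
  | zero => simp
  | succ k ih =>
    rw [Nat.succ_mul, ← add_assoc, circS_add, ih, zero_add, circS_natCast_eq_circDelta, pow_succ,
      mul_assoc]

theorem circS_add_mul_period (p k : ℕ) :
    circS m ℓ 0 (p + k * m) = circS m ℓ 0 m ^ k * circS m ℓ 0 p := by
  induction k with
  | zero => simp
  | succ k ih =>
    rw [Nat.succ_mul, ← add_assoc, add_comm, circS_add, zero_add, ZMod.natCast_self, ih, pow_succ',
      mul_assoc]

theorem hom_ext_circS [NeZero m] {H : Type*} [Group H] {f g : CircularGroup m ℓ →* H}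
    (h : ∀ p : ℕ, f (circS m ℓ 0 p) = g (circS m ℓ 0 p)) : f = g := by
  refine PresentedGroup.ext fun i => ?_
  have hgen : PresentedGroup.of i = (circS m ℓ 0 i.val)⁻¹ * circS m ℓ 0 (i.val + 1) := by
    rw [circS_succ, zero_add, ZMod.natCast_zmod_val, inv_mul_cancel_left, circGen]
  rw [hgen, map_mul, map_mul, map_inv, map_inv, h, h]

end Relations

section Lift

variable {m ℓ : ℕ} [NeZero m] {H : Type*} [Group H] {t : ℕ → H} {δ σ : H}

theorem lift_circWord (hσ : ∀ i, t (i + m) = σ * t i) (i : ZMod m) (p : ℕ) :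
    FreeGroup.lift (fun j : ZMod m => (t j.val)⁻¹ * t (j.val + 1)) (circWord m i p) =
      (t i.val)⁻¹ * t (i.val + p) := by
  have hper : Function.Periodic (fun k => (t k)⁻¹ * t (k + 1)) m := by
    intro k
    simp only [add_right_comm k m 1, hσ]
    group
  have hval (k : ℕ) : (t (i + (k : ZMod m)).val)⁻¹ * t ((i + (k : ZMod m)).val + 1) =
      (t (i.val + k))⁻¹ * t (i.val + k + 1) := by
    rw [← hper.map_mod_nat (i.val + k), ← ZMod.val_natCast, Nat.cast_add, ZMod.natCast_zmod_val]
  induction p with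
  | zero => simp [circWord]
  | succ p ih =>
    have hsucc : circWord m i (p + 1) = circWord m i p * FreeGroup.of (i + (p : ZMod m)) := by
      simp [circWord, List.range_succ]
    rw [hsucc, map_mul, ih, FreeGroup.lift_apply_of, hval]
    group

theorem lift_eq_one_of_mem_circRels (hδ : ∀ i, t (i + ℓ) = t i * δ)
    (hσ : ∀ i, t (i + m) = σ * t i) : ∀ r ∈ circRels m ℓ,
      FreeGroup.lift (fun j : ZMod m => (t j.val)⁻¹ * t (j.val + 1)) r = 1 := by
  rintro r ⟨i, rfl⟩
  rw [map_mul, map_inv, lift_circWord hσ, lift_circWord hσ, hδ, hδ]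
  group

/-- The homomorphism out of `G(m,ℓ)` given by a sequence `t` in which every advance by `ℓ` is
right multiplication by `δ` and every advance by `m` is left multiplication by `σ`; it sends the
generator `a_i` to `(t i)⁻¹ * t (i + 1)`. -/
def lift (hδ : ∀ i, t (i + ℓ) = t i * δ) (hσ : ∀ i, t (i + m) = σ * t i) :
    CircularGroup m ℓ →* H :=
  PresentedGroup.toGroup (lift_eq_one_of_mem_circRels hδ hσ)

theorem lift_circS (hδ : ∀ i, t (i + ℓ) = t i * δ) (hσ : ∀ i, t (i + m) = σ * t i) (p : ℕ) :
    lift hδ hσ (circS m ℓ 0 p) = (t 0)⁻¹ * t p := by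
  rw [← mk_circWord]
  change FreeGroup.lift (fun j : ZMod m => (t j.val)⁻¹ * t (j.val + 1)) (circWord m 0 p) = _
  rw [lift_circWord hσ, ZMod.val_zero, zero_add]

end Lift

/-- The indices of the factors of a free product of cyclic groups of which the central quotient of
`G(m,ℓ)` is a retract. The generators `alpha` and `beta` are the multipliers in the recurrence
`t (i + d) = β * t i * α` satisfied by the images `t i` of `s(0,i)`, and `initial r`, needed only
for `r < d`, is its free initial value `t r`. -/
inductive RetractFactor
  | alpha
  | beta
  | initial (r : ℕ)

/-- The orders of the cyclic factors; `0` stands for infinite order. -/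
def RetractFactor.order (p q : ℕ) : RetractFactor → ℕ
  | alpha => p
  | beta => q
  | initial _ => 0

open RetractFactor CyclicFreeProduct

section RetractSequence

variable {p q d : ℕ}

/-- The images in the free product of the elements `s(0,i)`, up to a common left factor. -/
def retractSequence (p q d : ℕ) : ℕ → CyclicFreeProduct (order p q) :=
  stepSequence d (gen _ alpha) (gen _ beta) fun r => gen _ (initial r)

variable [NeZero d]

theorem retractSequence_add_length (i : ℕ) :
    retractSequence p q d (i + q * d) = retractSequence p q d i * gen _ alpha ^ q := by
  have hβ : gen (order p q) beta ^ q = 1 := gen_pow beta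
  rw [retractSequence, stepSequence_add_mul (NeZero.pos d), hβ, one_mul]

theorem retractSequence_add_period (i : ℕ) :
    retractSequence p q d (i + p * d) = gen _ beta ^ p * retractSequence p q d i := by
  have hα : gen (order p q) alpha ^ p = 1 := gen_pow alpha
  rw [retractSequence, stepSequence_add_mul (NeZero.pos d), hα, mul_one]

end RetractSequence

section CentralQuotient

variable (p q d : ℕ)

local notation "Δ" => circDelta (p * d) (q * d)

local notation "s₀" => circS (p * d) (q * d) 0

theorem circS_period_pow_eq_circDelta_pow : s₀ (p * d) ^ q = Δ ^ p := by
  have hσ := circS_add_mul_period (m := p * d) (ℓ := q * d) 0 q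
  have hδ := circS_add_mul_length (m := p * d) (ℓ := q * d) 0 p
  rw [mul_left_comm, hσ, circS_zero, mul_one, one_mul] at hδ
  exact hδ

theorem commute_circDelta_pow_circS (i : ℕ) : Commute (Δ ^ p) (s₀ i) := by
  have h := circS_add_mul_length (m := p * d) (ℓ := q * d) i p
  rwa [mul_left_comm, circS_add_mul_period, circS_period_pow_eq_circDelta_pow] at h

/-- The central subgroup of `G(m,ℓ)` generated by `Δ ^ p`, where `m = p * d` and `ℓ = q * d`. The
factors `p`, `q`, `d` are kept as parameters so that no division by `gcd(m,ℓ)` appears. -/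
abbrev centralSubgroup : Subgroup (CircularGroup (p * d) (q * d)) :=
  Subgroup.zpowers (Δ ^ p)

/-- The quotient of `G(m,ℓ)` by the central subgroup `⟨Δ ^ p⟩`. -/
abbrev CentralQuotient : Type :=
  CircularGroup (p * d) (q * d) ⧸ centralSubgroup p q d

variable {p q d}

theorem circS_add_step {a b : ℕ} (hab : q * a = p * b + 1) (i : ℕ) :
    s₀ (i + d) = (s₀ (p * d) ^ b)⁻¹ * s₀ i * Δ ^ a := by
  have hindex : i + d + b * (p * d) = i + a * (q * d) := by
    linear_combination d * hab.symm
  rw [mul_assoc, ← circS_add_mul_length, ← hindex, circS_add_mul_period, inv_mul_cancel_left]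

variable [NeZero p] [NeZero d]

theorem commute_circDelta_pow (x : CircularGroup (p * d) (q * d)) : Commute (Δ ^ p) x := by
  have hconj : (MulAut.conj (Δ ^ p)).toMonoidHom = MonoidHom.id _ := by
    refine hom_ext_circS fun i => ?_
    rw [MulEquiv.toMonoidHom_eq_coe, MonoidHom.coe_coe, MulAut.conj_apply, MonoidHom.id_apply,
      (commute_circDelta_pow_circS p q d i).mul_inv_cancel]
  exact mul_inv_eq_iff_eq_mul.1 (DFunLike.congr_fun hconj x)

instance : (centralSubgroup p q d).Normal where
  conj_mem := by
    rintro _ ⟨k, rfl⟩ x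
    change x * (Δ ^ p) ^ k * x⁻¹ ∈ _
    rw [((commute_circDelta_pow x).zpow_left k).symm.mul_inv_cancel]
    exact Subgroup.zpow_mem_zpowers _ k

theorem mk_circDelta_pow : (Δ : CentralQuotient p q d) ^ p = 1 :=
  (QuotientGroup.eq_one_iff (Δ ^ p)).2 (Subgroup.mem_zpowers _)

theorem mk_circS_period_pow : (s₀ (p * d) : CentralQuotient p q d) ^ q = 1 := by
  rw [← QuotientGroup.mk_pow, circS_period_pow_eq_circDelta_pow, QuotientGroup.mk_pow,
    mk_circDelta_pow]

section Retract

variable (p q d)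

/-- The homomorphism from the central quotient of `G(m,ℓ)` to a free product of cyclic groups given
by `retractSequence`; it is an embedding when `p` and `q` are coprime. -/
def toCyclicFreeProduct : CentralQuotient p q d →* CyclicFreeProduct (order p q) :=
  QuotientGroup.lift _ (CircularGroup.lift (t := retractSequence p q d) retractSequence_add_length
    retractSequence_add_period) <| by
      have hα : gen (order p q) alpha ^ p = 1 := gen_pow alpha
      rw [Subgroup.zpowers_le, MonoidHom.mem_ker, map_pow, circDelta, lift_circS,
        ← zero_add (q * d), retractSequence_add_length, inv_mul_cancel_left, ← pow_mul, mul_comm,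
        pow_mul, hα, one_pow]

/-- The images of the generators of the cyclic factors under the retraction. -/
def retractImage (a b : ℕ) : RetractFactor → CentralQuotient p q d
  | alpha => (Δ : CentralQuotient p q d) ^ a
  | beta => ((s₀ (p * d) : CentralQuotient p q d) ^ b)⁻¹
  | initial r => s₀ r

theorem retractImage_pow_order (a b : ℕ) (i : RetractFactor) :
    retractImage p q d a b i ^ order p q i = 1 := by
  cases i with
  | alpha => rw [retractImage, order, pow_right_comm, mk_circDelta_pow, one_pow]
  | beta => rw [retractImage, order, inv_pow, pow_right_comm, mk_circS_period_pow, one_pow, inv_one]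
  | initial r => exact pow_zero _

/-- A left inverse of `toCyclicFreeProduct` when `q * a = p * b + 1`. -/
def ofCyclicFreeProduct (a b : ℕ) : CyclicFreeProduct (order p q) →* CentralQuotient p q d :=
  CyclicFreeProduct.lift (retractImage p q d a b) (retractImage_pow_order p q d a b)

variable {p q d}

theorem ofCyclicFreeProduct_retractSequence {a b : ℕ} (hab : q * a = p * b + 1) (i : ℕ) :
    ofCyclicFreeProduct p q d a b (retractSequence p q d i) = s₀ i := by
  rw [retractSequence, map_stepSequence]
  simp only [ofCyclicFreeProduct, lift_gen]
  exact stepSequence_eq_self (u := fun i => (s₀ i : CentralQuotient p q d))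
    (fun i => congrArg QuotientGroup.mk (circS_add_step hab i)) i

theorem leftInverse_ofCyclicFreeProduct {a b : ℕ} (hab : q * a = p * b + 1) :
    Function.LeftInverse (ofCyclicFreeProduct p q d a b) (toCyclicFreeProduct p q d) := by
  suffices h : ((ofCyclicFreeProduct p q d a b).comp (toCyclicFreeProduct p q d)).comp
      (QuotientGroup.mk' _) = QuotientGroup.mk' _ by
    intro x
    obtain ⟨x, rfl⟩ := QuotientGroup.mk_surjective x
    exact DFunLike.congr_fun h x
  refine hom_ext_circS fun i => ?_
  change ofCyclicFreeProduct p q d a b (CircularGroup.lift retractSequence_add_length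
    retractSequence_add_period (s₀ i)) = s₀ i
  rw [lift_circS, map_mul, map_inv, ofCyclicFreeProduct_retractSequence hab,
    ofCyclicFreeProduct_retractSequence hab, circS_zero, QuotientGroup.mk_one, inv_one, one_mul]

end Retract

theorem exists_isConj_zpow_of_isOfFinOrder (hpq : p.Coprime q) (hq : q ≠ 0)
    {x : CentralQuotient p q d} (hx : IsOfFinOrder x) :
    (∃ n : ℤ, IsConj x (s₀ (p * d) ^ n)) ∨ ∃ n : ℤ, IsConj x (Δ ^ n) := by
  obtain ⟨a, b, hab⟩ := exists_mul_eq_mul_add_one_of_coprime hpq hq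
  rcases eq_one_or_exists_isConj_of_leftInverse (leftInverse_ofCyclicFreeProduct hab) hx with
    rfl | ⟨i, hi, k, hk⟩
  · exact Or.inr ⟨0, by rw [zpow_zero]⟩
  rw [ofCyclicFreeProduct, lift_gen] at hk
  cases i with
  | alpha =>
    refine Or.inr ⟨a * k, ?_⟩
    rwa [zpow_mul, zpow_natCast]
  | beta =>
    refine Or.inl ⟨-b * k, ?_⟩
    rwa [zpow_mul, zpow_neg, zpow_natCast]
  | initial r => exact absurd rfl hi

theorem isOfFinOrder_mk_of_circIsPeriodic {x : CircularGroup (p * d) (q * d)}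
    (hx : CircIsPeriodic (p * d) (q * d) x) : IsOfFinOrder (x : CentralQuotient p q d) := by
  obtain ⟨a, ha, b, hab⟩ := hx
  refine isOfFinOrder_iff_zpow_eq_one.2 ⟨a * p, mul_ne_zero ha (by exact_mod_cast NeZero.ne p), ?_⟩
  rw [zpow_mul, ← QuotientGroup.mk_zpow, hab, QuotientGroup.mk_zpow, zpow_comm, zpow_natCast,
    mk_circDelta_pow, one_zpow]

end CentralQuotient

end CircularGroup

/-- Every periodic element of `G(m,ℓ)` is conjugate to an integer power of `s(0,m)`
or to an integer power of `Δ`. -/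
theorem periodic_conjugate_to_power (m ℓ : ℕ) (hm : 0 < m) (hℓ : 0 < ℓ)
    (x : CircularGroup m ℓ) (hx : CircIsPeriodic m ℓ x) :
    (∃ n : ℤ, IsConj x ((circS m ℓ 0 m) ^ n)) ∨ (∃ n : ℤ, IsConj x ((circDelta m ℓ) ^ n)) := by
  obtain ⟨d, p, q, hd, hpq, rfl, rfl⟩ := Nat.exists_coprime' (Nat.gcd_pos_of_pos_left ℓ hm)
  have : NeZero d := ⟨hd.ne'⟩
  have : NeZero p := ⟨(Nat.pos_of_mul_pos_right hm).ne'⟩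
  have hq : q ≠ 0 := (Nat.pos_of_mul_pos_right hℓ).ne'
  have hfin := CircularGroup.isOfFinOrder_mk_of_circIsPeriodic hx
  rcases CircularGroup.exists_isConj_zpow_of_isOfFinOrder hpq hq hfin with ⟨n, hn⟩ | ⟨n, hn⟩
  · exact Or.inl (exists_isConj_zpow_of_isConj_mk_zpow
      (CircularGroup.circS_period_pow_eq_circDelta_pow p q d) hn)
  · exact Or.inr (exists_isConj_zpow_of_isConj_mk_zpow rfl hn)
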